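/- For every n ≥ 1, the ab-polynomial T(c^{n−1}·a) lies in the subring ℤ⟨c,d⟩, and its image under the unique algebra homomorphism from ℤ⟨c,d⟩ to ℚ[x] sending c to x and d to (x²−1)/2 equals the Chebyshev polynomial of the first kind T_n(x). -/

import Mathlib

open scoped TensorProduct

noncomputable section

namespace Tcheb

/-! ### The algebra `R⟨a,b⟩` of ab-polynomials -/

/-- Words in the two noncommuting letters `a` (encoded `true`) and `b` (encoded `false`). -/
abbrev ABWord : Type := FreeMonoid Bool

/-- The ring `R⟨a,b⟩` of polynomials in two noncommuting variables `a` and `b`. -/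
abbrev AB (R : Type) [CommRing R] : Type := MonoidAlgebra R ABWord

variable (R : Type) [CommRing R]

/-- The ab-monomial corresponding to a word. -/
def word (l : List Bool) : AB R := MonoidAlgebra.of R ABWord (FreeMonoid.ofList l)

/-- The variable `a`. -/
def av : AB R := word R [true]
/-- The variable `b`. -/
def bv : AB R := word R [false]
/-- `c = a + b`. -/
def cv : AB R := av R + bv R
/-- `d = ab + ba`. -/
def dv : AB R := av R * bv R + bv R * av R
/-- `a - b`. -/
def ev : AB R := av R - bv R

/-- The linear map defined by prescribing values on the basis of ab-monomials. -/
def onBasis {M : Type} [AddCommMonoid M] [Module R M] (f : List Bool → M) :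
    AB R →ₗ[R] M :=
  (Finsupp.lift M R ABWord fun w => f (FreeMonoid.toList w)) ∘ₗ
    (MonoidAlgebra.coeffLinearEquiv R).toLinearMap

/-- The algebra map `A` with `A(a) = 1`, `A(b) = 0`. -/
def Amap : AB R →ₐ[R] R :=
  MonoidAlgebra.lift R R ABWord (FreeMonoid.lift fun x => if x then (1 : R) else 0)

/-- The coproduct on `R⟨a,b⟩`: on an ab-monomial `u₁ ⋯ u_k` it is
`Σ_{i=1}^k u₁ ⋯ u_{i-1} ⊗ u_{i+1} ⋯ u_k`. -/
def Delta : AB R →ₗ[R] AB R ⊗[R] AB R :=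
  onBasis R fun w => ∑ i ∈ Finset.range w.length,
    word R (w.take i) ⊗ₜ[R] word R (w.drop (i + 1))

/-- The linear map `C(u) = 2·A(u) + Σ_u A(u₍₁₎)·A(u₍₂₎)`. -/
def Cmap : AB R →ₗ[R] R :=
  2 • (Amap R).toLinearMap +
    (LinearMap.mul' R R ∘ₗ
      TensorProduct.map (Amap R).toLinearMap (Amap R).toLinearMap) ∘ₗ Delta R

/-- `κ(u) = A(u)·(a-b)^(deg u)` on homogeneous `u`, extended linearly. -/
def kappa : AB R →ₗ[R] AB R :=
  onBasis R fun w => Amap R (word R w) • ev R ^ w.length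

/-- `ν(u) = C(u)·(a-b)^(deg u)` on homogeneous `u`, extended linearly. -/
def nuMap : AB R →ₗ[R] AB R :=
  onBasis R fun w => Cmap R (word R w) • ev R ^ w.length

end Tcheb

namespace Tcheb

/-- Cutting a word into the list of segments between the (sorted) cut positions. -/
def segments : List Bool → List ℕ → List (List Bool)
  | l, [] => [l]
  | l, i :: rest => l.take i :: segments (l.drop (i + 1)) (rest.map fun j => j - (i + 1))
  termination_by _ cuts => cuts.length
  decreasing_by simp

variable (R : Type) [CommRing R]

/-- For segments `[s₁, …, s_k]` this is `ν(s₁)·b·ν(s₂)·b ⋯ b·ν(s_{k-1})·b·κ(s_k)`. -/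
def chainProd : List (List Bool) → AB R
  | [] => 1
  | [s] => kappa R (word R s)
  | s :: rest => nuMap R (word R s) * bv R * chainProd rest

/-- The Tchebyshev transform (of the first kind) on ab-polynomials:
`T(u) = Σ_{k ≥ 1} Σ_u ν(u₍₁₎)·b·ν(u₍₂₎)·b ⋯ b·ν(u₍ₖ₋₁₎)·b·κ(u₍ₖ₎)`,
where the inner sum is over the `k`-fold coproduct.  On the ab-monomial basis this
is the sum, over all sets of positions of deleted letters, of the corresponding
products over the resulting segments. -/
def Tmap : AB R →ₗ[R] AB R :=
  onBasis R fun w => ∑ S : Finset (Fin w.length),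
    chainProd R (segments w ((S.sort (· ≤ ·)).map Fin.val))

/-- The `ω` map on a word: replace each occurrence of `ab` by `2d` and all
remaining letters by `c`. -/
def omegaWord : List Bool → AB R
  | [] => 1
  | true :: false :: rest => (2 * dv R) * omegaWord rest
  | _ :: rest => cv R * omegaWord rest

/-- The `ω` map of Billera–Ehrenborg–Readdy. -/
def omegaMap : AB R →ₗ[R] AB R := onBasis R fun w => omegaWord R w

/-- The reversal involution `u ↦ u*` of ab-polynomials. -/
def revMap : AB R →ₗ[R] AB R := onBasis R fun w => word R w.reverse

/-- `H*(1) = 0` and `H*(u·a) = H*(u·b) = u`. -/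
def Hstar : AB R →ₗ[R] AB R :=
  onBasis R fun w => if w = [] then 0 else word R w.dropLast

/-- The Tchebyshev transform of the second kind `U(u) = H*(T(u·a))`. -/
def Umap : AB R →ₗ[R] AB R := Hstar R ∘ₗ Tmap R ∘ₗ LinearMap.mulRight R (av R)

/-- `σ(u) = Σ_u κ(u₍₁₎)·b·T(u₍₂₎)`. -/
def sigmaMap : AB R →ₗ[R] AB R :=
  LinearMap.mul' R (AB R) ∘ₗ
    TensorProduct.map (LinearMap.mulRight R (bv R) ∘ₗ kappa R) (Tmap R) ∘ₗ Delta R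

/-! ### Graded posets and the ab-index -/

/-- `rk` is a rank function for a bounded poset: `rk ⊥ = 0` and covers raise rank by one. -/
def IsRankFun (α : Type) [PartialOrder α] [OrderBot α] (rk : α → ℕ) : Prop :=
  rk ⊥ = 0 ∧ ∀ x y : α, x ⋖ y → rk y = rk x + 1

/-- `f` lists the elements of a chain in increasing order with respect to the
strict order relation `lt`. -/
def IsStrictChain {α : Type} (lt : α → α → Prop) {n : ℕ} (f : Fin (n + 1) → α) : Prop :=
  ∀ i j : Fin (n + 1), i < j → lt (f i) (f j)

/-- The weight of a chain `x₀ < x₁ < ⋯ < x_k`: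
`(a-b)^{ρ(x₀,x₁)-1}·b·(a-b)^{ρ(x₁,x₂)-1}·b ⋯ b·(a-b)^{ρ(x_{k-1},x_k)-1}`. -/
def chainWt {α : Type} (rk : α → ℕ) {n : ℕ} (f : Fin (n + 1) → α) : AB R :=
  (List.intersperse (bv R)
    (List.ofFn fun i : Fin n => ev R ^ (rk (f i.succ) - rk (f i.castSucc) - 1))).prod

/-- The ab-index `Ψ` of the graded poset with strict order relation `lt`, rank
function `rk`, minimum `b` and maximum `t`: the sum of the weights of all chains
from `b` to `t`. -/
def PsiRel {α : Type} (lt : α → α → Prop) (rk : α → ℕ) (b t : α) : AB R :=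
  ∑ᶠ (n : ℕ), ∑ᶠ (f : Fin (n + 1) → α)
    (_ : IsStrictChain lt f ∧ f 0 = b ∧ f (Fin.last n) = t), chainWt R rk f

end Tcheb

namespace Tcheb

/-! ### The Tchebyshev transform of a graded poset -/

section TPoset

variable (α : Type) [PartialOrder α] [BoundedOrder α]

/-- The elements `[x,y]` of the Tchebyshev transform: intervals of `P ∪ {-1̂}`,
i.e. pairs `(x,y)` with `x ∈ P ∪ {-1̂}`, `y ∈ P` and `x < y`. -/
def TPel : Type := {p : WithBot α × α // p.1 < (p.2 : WithBot α)}

/-- The underlying set of the Tchebyshev transform `T(P)`: the intervals `[x,y]`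
together with a new maximum element (`none`). -/
def TP : Type := Option (TPel α)

/-- The cover relation of the Tchebyshev transform `T(P)`:
`[x,y] ⋖ [y,w]` and `[x,y] ⋖ [x,w]` whenever `y ⋖ w` in `P`, and `[x,1̂] ⋖ 1̂_{T(P)}`. -/
inductive TPcov : TP α → TP α → Prop
  | up {x : WithBot α} {y w : α} (h1 : x < (y : WithBot α))
      (h2 : (y : WithBot α) < (w : WithBot α)) (hc : y ⋖ w) :
      TPcov (some ⟨(x, y), h1⟩) (some ⟨((y : WithBot α), w), h2⟩)
  | same {x : WithBot α} {y w : α} (h1 : x < (y : WithBot α))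
      (h2 : x < (w : WithBot α)) (hc : y ⋖ w) :
      TPcov (some ⟨(x, y), h1⟩) (some ⟨(x, w), h2⟩)
  | top {x : WithBot α} (h1 : x < ((⊤ : α) : WithBot α)) :
      TPcov (some ⟨(x, (⊤ : α)), h1⟩) none

/-- The strict order relation of `T(P)`, generated by the cover relation. -/
def TPlt : TP α → TP α → Prop := Relation.TransGen (TPcov α)

/-- The order relation of `T(P)`, generated by the cover relation. -/
def TPle : TP α → TP α → Prop := Relation.ReflTransGen (TPcov α)

/-- The minimum element `[-1̂, 0̂]` of `T(P)`. -/
def TPbot : TP α := some ⟨((⊥ : WithBot α), (⊥ : α)), WithBot.bot_lt_coe _⟩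

/-- The maximum element `1̂_{T(P)}` of `T(P)`. -/
def TPtop : TP α := none

/-- The rank function of `T(P)`: `ρ([x,y]) = ρ(y)` and `ρ(1̂_{T(P)}) = ρ(P) + 1`. -/
def TPrk (rk : α → ℕ) : TP α → ℕ
  | some p => rk p.1.2
  | none => rk (⊤ : α) + 1

theorem TPbot_ne_TPtop : TPbot α ≠ TPtop α := by
  simp only [TPbot, TPtop]
  exact Option.some_ne_none _

/-- The map `z : T(P) → P ∪ {2̂}` with `z([x,y]) = y` and `z(1̂_{T(P)}) = 2̂`. -/
def zmap : TP α → WithTop α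
  | some p => (p.1.2 : WithTop α)
  | none => ⊤

/-- The number of elements of the interval `[u,v]` of `P`, for `u, v ∈ P ∪ {2̂}`. -/
def intervalCard (u v : WithTop α) : ℕ :=
  Set.ncard {t : α | u ≤ (t : WithTop α) ∧ (t : WithTop α) ≤ v}

end TPoset

/-! ### The dual diamond product -/

/-- The strict order relation of the dual diamond product
`P ◇* Q = ((P ∖ {1̂}) × (Q ∖ {1̂})) ∪ {1̂}` (with `none` the new maximum), built from
the order relations `leA, ltA` and `leB, ltB` of the two factors. -/
def dsLT {A B : Type} (leA ltA : A → A → Prop) (leB ltB : B → B → Prop) :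
    Option (A × B) → Option (A × B) → Prop
  | some p, some q => (leA p.1 q.1 ∧ leB p.2 q.2) ∧ (ltA p.1 q.1 ∨ ltB p.2 q.2)
  | some _, none => True
  | none, _ => False

/-! ### EL-labelings -/

/-- The list of edge labels along a chain (given as a list of poset elements). -/
def labelsList {α Λ : Type} (lam : α → α → Λ) (l : List α) : List Λ :=
  (l.zip l.tail).map fun p => lam p.1 p.2

/-- `l` is a maximal (saturated) chain of the interval `[x,y]` with respect to the
cover relation `cov`: it runs from `x` to `y` and every step is a cover. -/
def IsMaxChainList {α : Type} (cov : α → α → Prop) (x y : α) (l : List α) : Prop :=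
  l.head? = some x ∧ l.getLast? = some y ∧ l.Chain' cov

/-- An `EL`-labeling of the poset whose cover relation is `cov`, with labels in the
linearly ordered set `(Λ, lle, llt)`: every interval has a unique rising maximal
chain, which moreover is lexicographically least among all maximal chains of the
interval. -/
def IsELLabeling (α Λ : Type) (lle llt : Λ → Λ → Prop)
    (cov : α → α → Prop) (lam : α → α → Λ) : Prop :=
  ∀ x y : α, Relation.ReflTransGen cov x y →
    ∃ l : List α, (IsMaxChainList cov x y l ∧ (labelsList lam l).Chain' lle) ∧
      (∀ l' : List α, IsMaxChainList cov x y l' →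
        (labelsList lam l').Chain' lle → l' = l) ∧
      (∀ l' : List α, IsMaxChainList cov x y l' →
        labelsList lam l = labelsList lam l' ∨
          List.Lex llt (labelsList lam l) (labelsList lam l'))

/-! ### Eulerian posets -/

/-- A graded poset is Eulerian if every nontrivial interval `[x,y]` has the
same number of elements of even rank as of odd rank. -/
def IsEulerian (α : Type) [PartialOrder α] (rk : α → ℕ) : Prop :=
  ∀ x y : α, x < y →
    Set.ncard {z : α | x ≤ z ∧ z ≤ y ∧ Even (rk z)} =
      Set.ncard {z : α | x ≤ z ∧ z ≤ y ∧ ¬ Even (rk z)}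

/-! ### The face lattice of the crosspolytope -/

/-- A face of the `n`-dimensional crosspolytope: a partial sign vector, i.e. the
pair `(S, ε)` of a subset `S ⊆ {1,…,n}` (the set of coordinates where the function
takes a value `some`) together with a sign function `ε` on `S`. -/
def CrossEl (n : ℕ) : Type := Fin n → Option Bool

/-- `(S,ε) ≤ (T,δ)` iff `S ⊆ T` and `δ` restricted to `S` is `ε`. -/
instance (n : ℕ) : PartialOrder (CrossEl n) where
  le f g := ∀ i s, f i = some s → g i = some s
  le_refl f i s h := h
  le_trans f g h fg gh i s hi := gh i s (fg i s hi)
  le_antisymm f g fg gf := by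
    funext i
    cases hf : f i with
    | some s => exact (fg i s hf).symm
    | none =>
      cases hg : g i with
      | some s => exact absurd (gf i s hg) (by simp [hf])
      | none => rfl

/-- The face lattice of the `n`-dimensional crosspolytope: all partial sign
vectors together with a new maximum element. -/
abbrev Cross (n : ℕ) : Type := WithTop (CrossEl n)

/-- The rank function of the face lattice of the crosspolytope:
`ρ(S,ε) = |S|` and the maximum has rank `n + 1`. -/
def crossRk (n : ℕ) : Cross n → ℕ
  | none => n + 1
  | some f => (Finset.univ.filter fun i : Fin n => (f i).isSome).card

/-- The minimal element (the empty face) of the crosspolytope face lattice. -/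
def crossBot (n : ℕ) : Cross n := WithTop.some (fun _ => none)

/-- The maximal element of the crosspolytope face lattice. -/
def crossTop (n : ℕ) : Cross n := ⊤

/-! ### Quasisymmetric functions -/

/-- The monomial quasisymmetric function `M_{(p₁,…,p_k)}`, as a formal power
series in the countably many commuting variables `t₁, t₂, …` (indexed by `ℕ`). -/
def MQ (R : Type) [CommRing R] (ps : List ℕ) : MvPowerSeries ℕ R :=
  fun m => if ((m.support.sort (· ≤ ·)).map fun i => m i) = ps then 1 else 0

/-- The `t`-part of a monomial in the variables `s` (index `none`) and
`t₁, t₂, …` (indices `some i`). -/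
def tpart (m : Option ℕ →₀ ℕ) : ℕ →₀ ℕ :=
  Finsupp.comapDomain some m (Option.some_injective ℕ).injOn

/-- The type B monomial quasisymmetric function `s^p · M_{(p₁,…,p_k)}`, a formal
power series in the variables `s` (index `none`) and `t₁, t₂, …` (indices `some i`). -/
def MB (R : Type) [CommRing R] (p : ℕ) (ps : List ℕ) : MvPowerSeries (Option ℕ) R :=
  fun m => if m none = p ∧
      (((tpart m).support.sort (· ≤ ·)).map fun i => tpart m i) = ps then 1 else 0

/-- The quasisymmetric function `F(P)` of the graded poset with strict order
relation `lt`, rank function `rk`, minimum `b` and maximum `t`: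
`F(P) = Σ_c M_{(ρ(x₀,x₁),…,ρ(x_{k-1},x_k))}` over all chains `c` from `b` to `t`. -/
def FQ (R : Type) [CommRing R] {α : Type} (lt : α → α → Prop) (rk : α → ℕ)
    (b t : α) : MvPowerSeries ℕ R :=
  ∑ᶠ (n : ℕ), ∑ᶠ (f : Fin (n + 1) → α)
    (_ : IsStrictChain lt f ∧ f 0 = b ∧ f (Fin.last n) = t),
    MQ R (List.ofFn fun i : Fin n => rk (f i.succ) - rk (f i.castSucc))

/-- The type B quasisymmetric function `F_B(P) = Σ_{0̂ < x ≤ 1̂} s^{ρ(x)-1}·F([x,1̂])`,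
written as a sum over all chains `0̂ < x₀ < x₁ < ⋯ < x_k = 1̂` of
`s^{ρ(x₀)-1}·M_{(ρ(x₀,x₁),…,ρ(x_{k-1},x_k))}`. -/
def FB (R : Type) [CommRing R] {α : Type} (lt : α → α → Prop) (rk : α → ℕ)
    (b t : α) : MvPowerSeries (Option ℕ) R :=
  ∑ᶠ (n : ℕ), ∑ᶠ (f : Fin (n + 1) → α)
    (_ : IsStrictChain lt f ∧ lt b (f 0) ∧ f (Fin.last n) = t),
    MB R (rk (f 0) - 1) (List.ofFn fun i : Fin n => rk (f i.succ) - rk (f i.castSucc))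

/-! ### Characters and the chain maps -/

/-- A character on `k⟨a,b⟩`: a linear functional which is multiplicative with
respect to Cartesian products of graded posets (of rank at least 1). -/
def IsCharacter (k : Type) [Field k] (G : AB k →ₗ[k] k) : Prop :=
  ∀ (α β : Type) [Fintype α] [Fintype β] [PartialOrder α] [PartialOrder β]
    [BoundedOrder α] [BoundedOrder β], ∀ (rkα : α → ℕ) (rkβ : β → ℕ),
    IsRankFun α rkα → IsRankFun β rkβ → 1 ≤ rkα ⊤ → 1 ≤ rkβ ⊤ →
    G (PsiRel k (· < ·) (fun p : α × β => rkα p.1 + rkβ p.2)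
        ((⊥ : α), (⊥ : β)) ((⊤ : α), (⊤ : β))) =
      G (PsiRel k (· < ·) rkα ⊥ ⊤) * G (PsiRel k (· < ·) rkβ ⊥ ⊤)

/-- The quasisymmetric function image `g̃F(P)` of the chain map of the second kind:
`Σ_c G(Ψ([x₀,x₁])) ⋯ G(Ψ([x_{k-1},x_k])) · M_{(ρ(x₀,x₁),…,ρ(x_{k-1},x_k))}`,
summed over all chains `c = {b = x₀ < ⋯ < x_k = t}`. -/
def gtF (k : Type) [Field k] (G : AB k →ₗ[k] k) {α : Type} (lt : α → α → Prop)
    (rk : α → ℕ) (b t : α) : MvPowerSeries ℕ k :=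
  ∑ᶠ (n : ℕ), ∑ᶠ (f : Fin (n + 1) → α)
    (_ : IsStrictChain lt f ∧ f 0 = b ∧ f (Fin.last n) = t),
    (∏ i : Fin n, G (PsiRel k lt rk (f i.castSucc) (f i.succ))) •
      MQ k (List.ofFn fun i : Fin n => rk (f i.succ) - rk (f i.castSucc))

/-- The type B quasisymmetric function image `gF_B(P) = Σ_{0̂ < x ≤ 1̂}
s^{ρ(x)-1}·g̃F([x,1̂])` of the chain map of the first kind, written as a sum over
all chains `0̂ < x₀ < ⋯ < x_k = 1̂`. -/
def gFB (k : Type) [Field k] (G : AB k →ₗ[k] k) {α : Type} (lt : α → α → Prop)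
    (rk : α → ℕ) (b t : α) : MvPowerSeries (Option ℕ) k :=
  ∑ᶠ (n : ℕ), ∑ᶠ (f : Fin (n + 1) → α)
    (_ : IsStrictChain lt f ∧ lt b (f 0) ∧ f (Fin.last n) = t),
    (∏ i : Fin n, G (PsiRel k lt rk (f i.castSucc) (f i.succ))) •
      MB k (rk (f 0) - 1) (List.ofFn fun i : Fin n => rk (f i.succ) - rk (f i.castSucc))

/-- The space of homogeneous ab-polynomials of degree `n`. -/
def ABhomog (k : Type) [Field k] (n : ℕ) : Submodule k (AB k) :=
  Submodule.span k {x : AB k | ∃ w : List Bool, w.length = n ∧ x = word k w}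

/-! Cutting a word at its first deleted letter gives `T(u) = κ(u) + Σ_u ν(u₍₁₎)·b·T(u₍₂₎)`. Put
`e = a - b` and `σ(u) = Σ_u κ(u₍₁₎)·b·T(u₍₂₎)`. Since `κ(c·u) = e·κ(u)` and
`ν(c·u) = e·(ν(u) + 2κ(u))`, left multiplication by `c` acts on the pair `(T, σ)` by
`T(c·u) = (e + 4b)·T(u) + 2e·σ(u)` and `σ(c·u) = 2b·T(u) + e·σ(u)`. Eliminating `σ` leaves
`T(c²·u) = 2c·T(c·u) - e²·T(u)`, and `e² = c² - 2d`. This is the recursion of the Chebyshev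
polynomials as soon as `c² - 2d` is sent to `1`. -/

section Words

variable (R : Type) [CommRing R]

theorem onBasis_word {M : Type} [AddCommMonoid M] [Module R M] (f : List Bool → M)
    (w : List Bool) : onBasis R f (word R w) = f w := by
  simp [onBasis, word]

theorem word_nil : word R [] = 1 :=
  map_one (MonoidAlgebra.of R ABWord)

theorem word_cons (x : Bool) (w : List Bool) : word R (x :: w) = word R [x] * word R w :=
  map_mul (MonoidAlgebra.of R ABWord) (FreeMonoid.ofList [x]) (FreeMonoid.ofList w)

theorem cv_mul_word (w : List Bool) :
    cv R * word R w = word R (true :: w) + word R (false :: w) := by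
  rw [word_cons, word_cons R false, ← add_mul]
  rfl

variable {R} in
theorem linearMap_ext_word {M : Type} [AddCommMonoid M] [Module R M] {f g : AB R →ₗ[R] M}
    (h : ∀ w, f (word R w) = g (word R w)) : f = g := by
  refine MonoidAlgebra.lhom_ext' fun w => LinearMap.ext_ring ?_
  exact h (FreeMonoid.toList w)

end Words

section Segments

variable {M : Type*} [AddCommMonoid M]

/-- The elements of `S` in increasing order: the positions of the deleted letters, in the form
in which `segments` expects them. -/
def cutPositions {n : ℕ} (S : Finset (Fin n)) : List ℕ :=
  (S.sort (· ≤ ·)).map Fin.val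

theorem cutPositions_map_succ {n : ℕ} (S : Finset (Fin n)) :
    cutPositions (S.map (Fin.succEmb n)) = (cutPositions S).map (· + 1) := by
  rw [cutPositions, ← Finset.map_sort (Fin.succEmb n) S (· ≤ ·) (· ≤ ·) (by simp)]
  simp [cutPositions]

theorem cutPositions_insert_zero {n : ℕ} (S : Finset (Fin n)) :
    cutPositions (insert 0 (S.map (Fin.succEmb n))) = 0 :: (cutPositions S).map (· + 1) := by
  rw [← cutPositions_map_succ, cutPositions,
    Finset.sort_insert (r := (· ≤ ·)) (by simp) (by simp)]
  rfl

theorem segments_ne_nil (w : List Bool) (cuts : List ℕ) : segments w cuts ≠ [] := by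
  cases cuts <;> simp [segments]

theorem segments_cons_zero (x : Bool) (w : List Bool) (cuts : List ℕ) :
    segments (x :: w) (0 :: cuts.map (· + 1)) = [] :: segments w cuts := by
  simp [segments, Function.comp_def]

theorem segments_cons_map_succ (x : Bool) (w : List Bool) (cuts : List ℕ) :
    segments (x :: w) (cuts.map (· + 1)) = (segments w cuts).modifyHead (x :: ·) := by
  cases cuts <;> simp [segments, Function.comp_def]

theorem sum_finset_fin_succ {n : ℕ} (f : Finset (Fin (n + 1)) → M) :
    ∑ S, f S = ∑ S : Finset (Fin n), f (S.map (Fin.succEmb n)) +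
      ∑ S : Finset (Fin n), f (insert 0 (S.map (Fin.succEmb n))) := by
  have zero_notMem : (0 : Fin (n + 1)) ∉ Finset.univ.image (Fin.succEmb n) := by simp
  have univ_eq : (Finset.univ : Finset (Fin (n + 1))) =
      insert 0 (Finset.univ.image (Fin.succEmb n)) := by
    rw [Fin.univ_succ, Finset.cons_eq_insert, Finset.map_eq_image]
    rfl
  have image_injective := Finset.image_injective (Fin.succEmb n).injective
  rw [← Finset.powerset_univ, univ_eq, Finset.sum_powerset_insert zero_notMem,
    Finset.powerset_image, Finset.sum_image image_injective.injOn,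
    Finset.sum_image image_injective.injOn]
  simp only [Finset.powerset_univ, Finset.map_eq_image]

/-- The sum of `F` over all lists of segments that remain after deleting some letters of `w`. -/
def segmentSum (F : List (List Bool) → M) (w : List Bool) : M :=
  ∑ S : Finset (Fin w.length), F (segments w (cutPositions S))

theorem segmentSum_congr {F G : List (List Bool) → M} (h : ∀ L ≠ [], F L = G L)
    (w : List Bool) : segmentSum F w = segmentSum G w :=
  Finset.sum_congr rfl fun _ _ => h _ (segments_ne_nil _ _)

theorem segmentSum_nil (F : List (List Bool) → M) : segmentSum F [] = F [[]] := by
  have eq_empty : ∀ S : Finset (Fin ([] : List Bool).length), S = ∅ :=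
    fun S => Finset.eq_empty_of_isEmpty (α := Fin 0) S
  simp [segmentSum, eq_empty, cutPositions, segments]

theorem segmentSum_cons (F : List (List Bool) → M) (x : Bool) (w : List Bool) :
    segmentSum F (x :: w) =
      segmentSum (fun L => F (L.modifyHead (x :: ·))) w + segmentSum (fun L => F ([] :: L)) w := by
  refine (sum_finset_fin_succ fun S : Finset (Fin (w.length + 1)) =>
    F (segments (x :: w) (cutPositions S))).trans ?_
  simp only [segmentSum, cutPositions_map_succ, segments_cons_map_succ,
    cutPositions_insert_zero, segments_cons_zero]

theorem segmentSum_eq_add_sum (F : List (List Bool) → M) (w : List Bool) :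
    segmentSum F w = F [w] + ∑ i ∈ Finset.range w.length,
      segmentSum (fun L => F (w.take i :: L)) (w.drop (i + 1)) := by
  induction w generalizing F with
  | nil => simp [segmentSum_nil]
  | cons x w ih =>
    rw [segmentSum_cons, ih, List.length_cons, Finset.sum_range_succ', ← add_assoc]
    rfl

end Segments

section FunctionalEquation

variable (R : Type) [CommRing R]

theorem chainProd_cons (s : List Bool) {L : List (List Bool)} (hL : L ≠ []) :
    chainProd R (s :: L) = nuMap R (word R s) * bv R * chainProd R L := by
  obtain ⟨t, L, rfl⟩ := List.exists_cons_of_ne_nil hL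
  rfl

theorem Tmap_word_eq_segmentSum (w : List Bool) :
    Tmap R (word R w) = segmentSum (chainProd R) w :=
  onBasis_word R _ w

theorem Tmap_word (w : List Bool) :
    Tmap R (word R w) = kappa R (word R w) + ∑ i ∈ Finset.range w.length,
      nuMap R (word R (w.take i)) * bv R * Tmap R (word R (w.drop (i + 1))) := by
  rw [Tmap_word_eq_segmentSum, segmentSum_eq_add_sum]
  congr 1
  refine Finset.sum_congr rfl fun i _ => ?_
  rw [segmentSum_congr fun L hL => chainProd_cons R (w.take i) hL, Tmap_word_eq_segmentSum]
  exact (Finset.mul_sum ..).symm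

theorem sigmaMap_word (w : List Bool) :
    sigmaMap R (word R w) = ∑ i ∈ Finset.range w.length,
      kappa R (word R (w.take i)) * bv R * Tmap R (word R (w.drop (i + 1))) := by
  simp [sigmaMap, Delta, onBasis_word]

end FunctionalEquation

section Letters

variable (R : Type) [CommRing R] (w : List Bool)

theorem Amap_word_true_cons : Amap R (word R (true :: w)) = Amap R (word R w) := by
  rw [word_cons, map_mul]
  simp [Amap, word]

theorem Amap_word_false_cons : Amap R (word R (false :: w)) = 0 := by
  rw [word_cons, map_mul]
  simp [Amap, word]

theorem Cmap_word : Cmap R (word R w) = 2 * Amap R (word R w) +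
    ∑ i ∈ Finset.range w.length,
      Amap R (word R (w.take i)) * Amap R (word R (w.drop (i + 1))) := by
  simp [Cmap, Delta, onBasis_word]

theorem Cmap_word_true_cons :
    Cmap R (word R (true :: w)) = Cmap R (word R w) + Amap R (word R w) := by
  simp only [Cmap_word, List.length_cons, Finset.sum_range_succ', List.take_succ_cons,
    List.drop_succ_cons, List.take_zero, List.drop_zero, Amap_word_true_cons, word_nil, map_one,
    one_mul, add_assoc]

theorem Cmap_word_false_cons : Cmap R (word R (false :: w)) = Amap R (word R w) := by
  simp [Cmap_word, Finset.sum_range_succ', Amap_word_false_cons, word_nil]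

theorem Cmap_one : Cmap R 1 = 2 := by
  rw [← word_nil, Cmap_word]
  simp [word_nil]

theorem kappa_word : kappa R (word R w) = Amap R (word R w) • ev R ^ w.length :=
  onBasis_word R _ w

theorem nuMap_word : nuMap R (word R w) = Cmap R (word R w) • ev R ^ w.length :=
  onBasis_word R _ w

theorem kappa_one : kappa R 1 = 1 := by
  rw [← word_nil, kappa_word]
  simp [word_nil]

theorem nuMap_one : nuMap R 1 = 2 := by
  rw [← word_nil, nuMap_word]
  simp [word_nil, Cmap_one, two_smul, one_add_one_eq_two]

theorem kappa_word_true_cons : kappa R (word R (true :: w)) = ev R * kappa R (word R w) := by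
  rw [kappa_word, kappa_word, Amap_word_true_cons, List.length_cons, pow_succ', mul_smul_comm]

theorem kappa_word_false_cons : kappa R (word R (false :: w)) = 0 := by
  rw [kappa_word, Amap_word_false_cons, zero_smul]

theorem nuMap_word_true_cons : nuMap R (word R (true :: w)) =
    ev R * (nuMap R (word R w) + kappa R (word R w)) := by
  rw [nuMap_word, nuMap_word, kappa_word, Cmap_word_true_cons, List.length_cons, pow_succ',
    ← add_smul, mul_smul_comm]

theorem nuMap_word_false_cons :
    nuMap R (word R (false :: w)) = ev R * kappa R (word R w) := by
  rw [nuMap_word, kappa_word, Cmap_word_false_cons, List.length_cons, pow_succ', mul_smul_comm]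

theorem sigmaMap_word_true_cons : sigmaMap R (word R (true :: w)) =
    bv R * Tmap R (word R w) + ev R * sigmaMap R (word R w) := by
  simp [sigmaMap_word, Finset.sum_range_succ', kappa_word_true_cons, word_nil, kappa_one,
    Finset.mul_sum, mul_assoc, add_comm]

theorem sigmaMap_word_false_cons :
    sigmaMap R (word R (false :: w)) = bv R * Tmap R (word R w) := by
  simp [sigmaMap_word, Finset.sum_range_succ', kappa_word_false_cons, word_nil, kappa_one]

theorem Tmap_word_true_cons : Tmap R (word R (true :: w)) =
    (ev R + 2 * bv R) * Tmap R (word R w) + ev R * sigmaMap R (word R w) := by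
  have ev_mul_Tmap : ev R * Tmap R (word R w) = ev R * kappa R (word R w) +
      ∑ i ∈ Finset.range w.length,
        ev R * (nuMap R (word R (w.take i)) * bv R * Tmap R (word R (w.drop (i + 1)))) := by
    rw [Tmap_word, mul_add, Finset.mul_sum]
  rw [add_mul, ev_mul_Tmap, Tmap_word, sigmaMap_word]
  simp only [List.length_cons, Finset.sum_range_succ', List.take_succ_cons, List.drop_succ_cons,
    List.take_zero, List.drop_zero, nuMap_word_true_cons, kappa_word_true_cons, word_nil,
    nuMap_one, Finset.mul_sum, mul_add, add_mul, mul_assoc, Finset.sum_add_distrib]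
  abel

theorem Tmap_word_false_cons : Tmap R (word R (false :: w)) =
    2 * bv R * Tmap R (word R w) + ev R * sigmaMap R (word R w) := by
  rw [Tmap_word, sigmaMap_word]
  simp [Finset.sum_range_succ', nuMap_word_false_cons, kappa_word_false_cons, word_nil,
    nuMap_one, Finset.mul_sum, mul_assoc, add_comm]

end Letters

section Ladder

variable (R : Type) [CommRing R]

theorem Tmap_cv_mul (u : AB R) :
    Tmap R (cv R * u) = (ev R + 4 * bv R) * Tmap R u + 2 * ev R * sigmaMap R u := by
  have on_words : Tmap R ∘ₗ LinearMap.mulLeft R (cv R) =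
      LinearMap.mulLeft R (ev R + 4 * bv R) ∘ₗ Tmap R +
        LinearMap.mulLeft R (2 * ev R) ∘ₗ sigmaMap R := by
    refine linearMap_ext_word fun w => ?_
    simp only [LinearMap.comp_apply, LinearMap.add_apply, LinearMap.mulLeft_apply, cv_mul_word,
      map_add, Tmap_word_true_cons, Tmap_word_false_cons]
    noncomm_ring
  exact LinearMap.congr_fun on_words u

theorem sigmaMap_cv_mul (u : AB R) :
    sigmaMap R (cv R * u) = 2 * bv R * Tmap R u + ev R * sigmaMap R u := by
  have on_words : sigmaMap R ∘ₗ LinearMap.mulLeft R (cv R) =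
      LinearMap.mulLeft R (2 * bv R) ∘ₗ Tmap R + LinearMap.mulLeft R (ev R) ∘ₗ sigmaMap R := by
    refine linearMap_ext_word fun w => ?_
    simp only [LinearMap.comp_apply, LinearMap.add_apply, LinearMap.mulLeft_apply, cv_mul_word,
      map_add, sigmaMap_word_true_cons, sigmaMap_word_false_cons]
    noncomm_ring
  exact LinearMap.congr_fun on_words u

theorem ev_add_two_mul_bv : ev R + 2 * bv R = cv R := by
  rw [ev, cv]
  noncomm_ring

theorem ev_mul_ev : ev R * ev R = cv R ^ 2 - 2 * dv R := by
  rw [ev, cv, dv]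
  noncomm_ring

theorem Tmap_cv_mul_cv_mul (u : AB R) :
    Tmap R (cv R * (cv R * u)) =
      2 * cv R * Tmap R (cv R * u) - (cv R ^ 2 - 2 * dv R) * Tmap R u := by
  have eliminate_sigma : 2 * ev R * sigmaMap R u =
      Tmap R (cv R * u) - (ev R + 4 * bv R) * Tmap R u := by
    rw [Tmap_cv_mul, add_sub_cancel_left]
  calc Tmap R (cv R * (cv R * u))
      = (ev R + 4 * bv R) * Tmap R (cv R * u) +
          (4 * ev R * bv R * Tmap R u + ev R * (2 * ev R * sigmaMap R u)) := by
        rw [Tmap_cv_mul, sigmaMap_cv_mul]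
        noncomm_ring
    _ = 2 * (ev R + 2 * bv R) * Tmap R (cv R * u) - ev R * ev R * Tmap R u := by
        rw [eliminate_sigma]
        noncomm_ring
    _ = _ := by rw [ev_add_two_mul_bv, ev_mul_ev]

theorem Tmap_one : Tmap R 1 = 1 := by
  rw [← word_nil, Tmap_word]
  simp [word_nil, kappa_one]

theorem sigmaMap_one : sigmaMap R 1 = 0 := by
  rw [← word_nil, sigmaMap_word]
  simp

theorem Tmap_av : Tmap R (av R) = cv R := by
  rw [av, Tmap_word_true_cons, word_nil, Tmap_one, sigmaMap_one, ev_add_two_mul_bv]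
  simp

theorem sigmaMap_av : sigmaMap R (av R) = bv R := by
  rw [av, sigmaMap_word_true_cons, word_nil, Tmap_one, sigmaMap_one]
  simp

theorem Tmap_cv_mul_av : Tmap R (cv R * av R) = 2 * cv R * cv R - (cv R ^ 2 - 2 * dv R) := by
  rw [Tmap_cv_mul, Tmap_av, sigmaMap_av, ← ev_mul_ev, ← ev_add_two_mul_bv]
  noncomm_ring

end Ladder

section Chebyshev

/-- The Chebyshev polynomials of the first kind made homogeneous, with `x` of degree one and the
new variable `y` of degree two, and evaluated at elements of an arbitrary ring. In the products
of the recursion the coefficients `2x` and `y` stand on the left. -/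
def homogChebyshevT {A : Type*} [Ring A] (x y : A) : ℕ → A
  | 0 => 1
  | 1 => x
  | n + 2 => 2 * x * homogChebyshevT x y (n + 1) - y * homogChebyshevT x y n

theorem map_homogChebyshevT {A B F : Type*} [Ring A] [Ring B] [FunLike F A B]
    [RingHomClass F A B] (f : F) (x y : A) (n : ℕ) :
    f (homogChebyshevT x y n) = homogChebyshevT (f x) (f y) n := by
  induction n using Nat.twoStepInduction with
  | zero => exact map_one f
  | one => rfl
  | more n ih₀ ih₁ => simp [homogChebyshevT, ih₀, ih₁, map_ofNat]

theorem homogChebyshevT_one_right (R : Type*) [CommRing R] {A : Type*} [Ring A] [Algebra R A]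
    (x : A) (n : ℕ) :
    homogChebyshevT x 1 n = Polynomial.aeval x (Polynomial.Chebyshev.T R n) := by
  induction n using Nat.twoStepInduction with
  | zero => simp [homogChebyshevT]
  | one => simp [homogChebyshevT]
  | more n ih₀ ih₁ =>
    push_cast at ih₁ ⊢
    simp [homogChebyshevT, ih₀, ih₁, Polynomial.Chebyshev.T_add_two, map_ofNat]

theorem Tmap_cv_pow_mul_av (R : Type) [CommRing R] (n : ℕ) :
    Tmap R (cv R ^ n * av R) = homogChebyshevT (cv R) (cv R ^ 2 - 2 * dv R) (n + 1) := by
  induction n using Nat.twoStepInduction with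
  | zero => simp [homogChebyshevT, Tmap_av]
  | one => simp [homogChebyshevT, Tmap_cv_mul_av]
  | more n ih₀ ih₁ =>
    rw [pow_succ', mul_assoc] at ih₁
    rw [pow_succ', pow_succ', mul_assoc, mul_assoc, Tmap_cv_mul_cv_mul, ih₀, ih₁]
    rfl

end Chebyshev

theorem tchebyshev_of_ladder_general (R : Type) [CommRing R] (n : ℕ) :
    Tmap R (cv R ^ n * av R) ∈ Algebra.adjoin R ({cv R, dv R} : Set (AB R)) ∧
    ∀ (h : Tmap R (cv R ^ n * av R) ∈ Algebra.adjoin R ({cv R, dv R} : Set (AB R)))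
      {B : Type*} [Ring B] [Algebra R B]
      (φ : Algebra.adjoin R ({cv R, dv R} : Set (AB R)) →ₐ[R] B),
      2 * φ ⟨dv R, Algebra.subset_adjoin (Set.mem_insert_of_mem _ rfl)⟩ =
        φ ⟨cv R, Algebra.subset_adjoin (Set.mem_insert _ _)⟩ ^ 2 - 1 →
      φ ⟨_, h⟩ = Polynomial.aeval (φ ⟨cv R, Algebra.subset_adjoin (Set.mem_insert _ _)⟩)
        (Polynomial.Chebyshev.T R (n + 1 : ℕ)) := by
  let S : Subalgebra R (AB R) := Algebra.adjoin R {cv R, dv R}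
  let c : S := ⟨cv R, Algebra.subset_adjoin (Set.mem_insert _ _)⟩
  let d : S := ⟨dv R, Algebra.subset_adjoin (Set.mem_insert_of_mem _ rfl)⟩
  let t : S := homogChebyshevT c (c ^ 2 - 2 * d) (n + 1)
  have t_eq : (t : AB R) = Tmap R (cv R ^ n * av R) :=
    (map_homogChebyshevT S.val c _ _).trans (Tmap_cv_pow_mul_av R n).symm
  refine ⟨t_eq ▸ t.2, fun h B _ _ φ hd => ?_⟩
  have map_sub_eq_one : φ (c ^ 2 - 2 * d) = 1 := by
    rw [map_sub, map_mul, map_pow, map_ofNat, hd, sub_sub_cancel]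
  calc φ ⟨_, h⟩ = φ t := congrArg φ (Subtype.ext t_eq.symm)
    _ = homogChebyshevT (φ c) 1 (n + 1) := by rw [map_homogChebyshevT, map_sub_eq_one]
    _ = Polynomial.aeval (φ c) (Polynomial.Chebyshev.T R (n + 1 : ℕ)) :=
      homogChebyshevT_one_right R (φ c) (n + 1)

theorem tchebyshev_of_ladder (n : ℕ) (hn : 1 ≤ n) :
    Tmap ℚ (cv ℚ ^ (n - 1) * av ℚ) ∈
        Algebra.adjoin ℚ ({cv ℚ, dv ℚ} : Set (AB ℚ)) ∧
    ∀ (h : Tmap ℚ (cv ℚ ^ (n - 1) * av ℚ) ∈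
        Algebra.adjoin ℚ ({cv ℚ, dv ℚ} : Set (AB ℚ)))
      (φ : Algebra.adjoin ℚ ({cv ℚ, dv ℚ} : Set (AB ℚ)) →ₐ[ℚ] Polynomial ℚ),
      φ ⟨cv ℚ, Algebra.subset_adjoin (Set.mem_insert _ _)⟩ = Polynomial.X →
      φ ⟨dv ℚ, Algebra.subset_adjoin (Set.mem_insert_of_mem _ rfl)⟩ =
        Polynomial.C (1 / 2 : ℚ) * (Polynomial.X ^ 2 - 1) →
      φ ⟨_, h⟩ = Polynomial.Chebyshev.T ℚ (n : ℤ) := by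
  obtain ⟨mem, image⟩ := tchebyshev_of_ladder_general ℚ (n - 1)
  refine ⟨mem, fun h φ hc hd => ?_⟩
  have two_mul_half : (2 : Polynomial ℚ) * Polynomial.C (1 / 2 : ℚ) = 1 := by
    rw [← Polynomial.C_ofNat, ← Polynomial.C_mul]
    norm_num
  rw [image h φ (by rw [hc, hd, ← mul_assoc, two_mul_half, one_mul]), hc,
    Polynomial.aeval_X_left_apply, Nat.sub_add_cancel hn]

end Tcheb
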